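/- arXiv:1907.05645 — 6 statements merged into one kernel-verified Lean document; each statement's English description precedes it below -/
import Mathlib

section
/- Let p be a prime, q a power of p, n, ℓ positive integers, and set e = gcd(ℓ(q-1), q^n - 1). Then the set {a ∈ F_{q^n} : a^ℓ ∈ F_q} is equal to the set {a ∈ F_{q^n} : a^{e+1} = a}, i.e. it is exactly the set of roots in F_{q^n} of the polynomial z^{e+1} - z. -/
/-- With `e = gcd(ℓ(q-1), q^n - 1)`, the set of `a ∈ F_{q^n}` with `a ^ ℓ ∈ F_q`
(i.e. `(a ^ ℓ) ^ q = a ^ ℓ`) equals the set of roots of `z ^ (e+1) - z`. -/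
theorem stmt_2 (p q n ℓ e : ℕ) (hp : p.Prime) (hq : ∃ m : ℕ, 0 < m ∧ q = p ^ m)
    (hn : 0 < n) (hℓ : 0 < ℓ) (he : e = Nat.gcd (ℓ * (q - 1)) (q ^ n - 1))
    (F : Type*) [Field F] [Fintype F] (hF : Fintype.card F = q ^ n) :
    {a : F | (a ^ ℓ) ^ q = a ^ ℓ} = {a : F | a ^ (e + 1) = a} := by
  have hq1 : 1 ≤ q := by
    obtain ⟨m, _, rfl⟩ := hq
    exact Nat.pos_of_ne_zero (pow_ne_zero _ hp.ne_zero)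
  ext a
  simp only [Set.mem_setOf_eq]
  by_cases ha : a = 0
  · subst ha
    simp [hℓ.ne', (show q ≠ 0 by omega)]
  have h1 : a ^ (q ^ n - 1) = 1 := by
    rw [← hF]
    exact FiniteField.pow_card_sub_one_eq_one a ha
  have hL : (a ^ ℓ) ^ q = a ^ ℓ ↔ a ^ (ℓ * (q - 1)) = 1 := by
    obtain ⟨k, rfl⟩ : ∃ k, q = k + 1 := ⟨q - 1, by omega⟩
    rw [Nat.add_sub_cancel, pow_succ, pow_mul]
    exact mul_eq_right₀ (pow_ne_zero _ ha)
  have hR : a ^ (e + 1) = a ↔ a ^ e = 1 := by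
    rw [pow_succ]
    exact mul_eq_right₀ ha
  rw [hL, hR, he]
  constructor
  · intro h
    exact orderOf_dvd_iff_pow_eq_one.mp
      (Nat.dvd_gcd (orderOf_dvd_of_pow_eq_one h) (orderOf_dvd_of_pow_eq_one h1))
  · intro h
    exact orderOf_dvd_iff_pow_eq_one.mp
      ((orderOf_dvd_of_pow_eq_one h).trans (Nat.gcd_dvd_left _ _))
end

section
/- Let p be a prime, q a power of p, and ℓ, n positive integers (not both equal to 1) with gcd(p, ℓ) = 1. Then the number of pairs (a, b) ∈ F_{q^n} × F_{q^n} satisfying b^{q^{n-1}} + b^{q^{n-2}} + ... + b^q + b = a^ℓ is exactly q^{n-1} · (gcd(ℓ(q-1), q^n - 1) + 1). -/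
open Polynomial in
theorem aux_ker {F : Type*} [Field F] [Fintype F] (q n : ℕ) (hq : 1 < q) (hn : 0 < n) :
    Nat.card {b : F // ∑ i ∈ Finset.range n, b ^ q ^ i = 0} ≤ q ^ (n - 1) := by
  classical
  set P : F[X] := ∑ i ∈ Finset.range n, X ^ q ^ i with hP
  have hdeg : P.natDegree ≤ q ^ (n - 1) := by
    refine natDegree_sum_le_of_forall_le _ _ fun i hi => ?_
    rw [natDegree_X_pow]
    exact Nat.pow_le_pow_right (by omega) (by have := Finset.mem_range.1 hi; omega)
  have hP0 : P ≠ 0 := by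
    intro h
    have h1 : P.coeff 1 = 1 := by
      rw [hP, finsetSum_coeff, Finset.sum_eq_single 0]
      · simp
      · intro i _ hi
        rw [coeff_X_pow, if_neg]
        exact (Nat.one_lt_pow hi hq).ne
      · intro h; simp at h; omega
    rw [h] at h1; simp at h1
  rw [Nat.card_eq_fintype_card, Fintype.card_subtype]
  calc _ ≤ P.roots.toFinset.card := by
        apply Finset.card_le_card
        intro b hb
        rw [Multiset.mem_toFinset, mem_roots hP0, IsRoot.def, hP]
        simpa [eval_finsetSum] using hb
    _ ≤ _ := (Multiset.toFinset_card_le _).trans ((card_roots' _).trans hdeg)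

open Polynomial in
theorem aux_fix {F : Type*} [Field F] [Fintype F] (q : ℕ) (hq : 1 < q) :
    Nat.card {b : F // b ^ q = b} ≤ q := by
  classical
  have hP0 : (X ^ q - X : F[X]) ≠ 0 := FiniteField.X_pow_card_sub_X_ne_zero F hq
  rw [Nat.card_eq_fintype_card, Fintype.card_subtype]
  calc _ ≤ (X ^ q - X : F[X]).roots.toFinset.card := by
        apply Finset.card_le_card
        intro b hb
        simpa [hP0, sub_eq_zero] using hb
    _ ≤ _ := (Multiset.toFinset_card_le _).trans ((card_roots' _).trans
        (FiniteField.X_pow_card_sub_X_natDegree_eq F hq).le)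

theorem aux_pow {F : Type*} [Field F] [Fintype F] (q ℓ : ℕ) (hq : 1 < q) (hℓ : 0 < ℓ) :
    Nat.card {a : F // (a ^ ℓ) ^ q = a ^ ℓ} = Nat.gcd (ℓ * (q - 1)) (Fintype.card F - 1) + 1 := by
  classical
  have hk := IsCyclic.card_powMonoidHom_ker (G := Fˣ) (ℓ * (q - 1))
  rw [Nat.card_eq_fintype_card (α := Fˣ), Fintype.card_units, Nat.gcd_comm] at hk
  rw [← hk, ← Finite.card_option]
  symm
  have key : ∀ u : Fˣ, ((u : F) ^ ℓ) ^ q = (u : F) ^ ℓ ↔ u ^ (ℓ * (q - 1)) = 1 := by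
    intro u
    obtain ⟨r, rfl⟩ : ∃ r, q = r + 1 := ⟨q - 1, by omega⟩
    rw [pow_succ, mul_eq_right₀ (pow_ne_zero _ u.ne_zero), ← pow_mul, Units.ext_iff]
    simp
  refine Nat.card_congr (Equiv.ofBijective (fun o : Option (powMonoidHom (α := Fˣ) (ℓ * (q - 1))).ker =>
    o.elim (⟨0, by simp [hℓ.ne', (show q ≠ 0 by omega)]⟩ : {a : F // (a ^ ℓ) ^ q = a ^ ℓ})
      (fun u => ⟨((u : Fˣ) : F), (key _).2 u.2⟩)) ⟨?_, ?_⟩)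
  · rintro (_ | ⟨u, hu⟩) (_ | ⟨v, hv⟩) h
    · rfl
    · exact absurd (congrArg Subtype.val h).symm v.ne_zero
    · exact absurd (congrArg Subtype.val h) u.ne_zero
    · have : u = v := Units.ext (congrArg Subtype.val h)
      subst this; rfl
  · rintro ⟨a, ha⟩
    by_cases h : a = 0
    · subst h; exact ⟨none, rfl⟩
    · exact ⟨some ⟨Units.mk0 a h, (key (Units.mk0 a h)).1 ha⟩, rfl⟩

theorem aux_main {F : Type*} [Field F] [Fintype F] (q n : ℕ) (hq : 1 < q) (hn : 0 < n)
    (hF : Fintype.card F = q ^ n) (hadd : ∀ i (x y : F), (x + y) ^ q ^ i = x ^ q ^ i + y ^ q ^ i)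
    (c : F) (hc : c ^ q = c) :
    Nat.card {b : F // ∑ i ∈ Finset.range n, b ^ q ^ i = c} = q ^ (n - 1) := by
  classical
  let T : F →+ F :=
    { toFun := fun b => ∑ i ∈ Finset.range n, b ^ q ^ i
      map_zero' := by
        refine Finset.sum_eq_zero fun i _ => zero_pow (pow_pos (by omega) i).ne'
      map_add' := fun x y => by simp only [hadd, Finset.sum_add_distrib] }
  have hT : ∀ b, T b = ∑ i ∈ Finset.range n, b ^ q ^ i := fun _ => rfl
  have hfix : ∀ b, T b ^ q = T b := by
    intro b
    let φ : F →+ F :=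
      { toFun := fun b => b ^ q
        map_zero' := zero_pow (by omega)
        map_add' := fun x y => by simpa using hadd 1 x y }
    have h1 : T b ^ q = ∑ i ∈ Finset.range n, b ^ q ^ (i + 1) := by
      change φ (T b) = _
      rw [hT, map_sum]
      refine Finset.sum_congr rfl fun i _ => ?_
      change (b ^ q ^ i) ^ q = _
      rw [← pow_mul, pow_succ]
    have h2 := Finset.sum_range_succ (fun i => b ^ q ^ i) n
    rw [Finset.sum_range_succ' (fun i => b ^ q ^ i) n] at h2
    rw [← hF, FiniteField.pow_card] at h2
    rw [h1, hT]
    simpa using h2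
  have hker : Nat.card T.ker ≤ q ^ (n - 1) := aux_ker q n hq hn
  have hsub : (T.range : Set F) ⊆ {b : F | b ^ q = b} := by
    rintro _ ⟨b, rfl⟩; exact hfix b
  have hfixc : Set.ncard {b : F | b ^ q = b} ≤ q := aux_fix q hq
  have hrange : Nat.card T.range ≤ q :=
    (Set.ncard_le_ncard hsub (Set.toFinite _)).trans hfixc
  have hprod : Nat.card T.ker * Nat.card T.range = q ^ (n - 1) * q := by
    rw [← AddSubgroup.index_ker, AddSubgroup.card_mul_index, Nat.card_eq_fintype_card, hF,
      ← pow_succ, Nat.sub_add_cancel hn]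
  have hqn : 0 < q ^ (n - 1) := pow_pos (by omega) _
  have hk : Nat.card T.ker = q ^ (n - 1) := by nlinarith
  have hr : Nat.card T.range = q := by
    rw [hk] at hprod; exact Nat.eq_of_mul_eq_mul_left hqn hprod
  have heq : (T.range : Set F) = {b : F | b ^ q = b} :=
    Set.eq_of_subset_of_ncard_le hsub (hfixc.trans hr.ge) (Set.toFinite _)
  have hcm : c ∈ (T.range : Set F) := by rw [heq]; exact hc
  obtain ⟨b0, hb0⟩ := hcm
  rw [← hk]
  refine Nat.card_congr ((Equiv.subRight b0).subtypeEquiv fun b => ?_)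
  rw [AddMonoidHom.mem_ker, Equiv.subRight_apply, map_sub, hb0, sub_eq_zero, hT]


/-- The number of `F_{q^n}`-rational affine points of the curve
`A_{n,q,ℓ} : y^{q^{n-1}} + ⋯ + y^q + y = x^ℓ` is `q^{n-1} · (gcd(ℓ(q-1), q^n - 1) + 1)`. -/
theorem stmt_3 (p q n ℓ : ℕ) (hp : p.Prime) (hq : ∃ m : ℕ, 0 < m ∧ q = p ^ m)
    (hn : 0 < n) (hℓ : 0 < ℓ) (hnot : ¬(ℓ = 1 ∧ n = 1)) (hcop : Nat.Coprime p ℓ)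
    (F : Type*) [Field F] [Fintype F] (hF : Fintype.card F = q ^ n) :
    Set.ncard {ab : F × F | ∑ i ∈ Finset.range n, ab.2 ^ q ^ i = ab.1 ^ ℓ} =
      q ^ (n - 1) * (Nat.gcd (ℓ * (q - 1)) (q ^ n - 1) + 1) := by

  classical
  obtain ⟨m, hm, hqm⟩ := hq
  have hq1 : 1 < q := hqm ▸ Nat.one_lt_pow hm.ne' hp.one_lt
  have : Fact p.Prime := ⟨hp⟩
  have : CharP F p := charP_of_card_eq_prime_pow (f := m * n) (by
    rw [hF, hqm, pow_mul])
  have hadd : ∀ i (x y : F), (x + y) ^ q ^ i = x ^ q ^ i + y ^ q ^ i := by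
    intro i x y
    rw [hqm, ← pow_mul]
    exact add_pow_char_pow x y _ _
  have hfix : ∀ b : F, (∑ i ∈ Finset.range n, b ^ q ^ i) ^ q = ∑ i ∈ Finset.range n, b ^ q ^ i := by
    intro b
    have h1 : (∑ i ∈ Finset.range n, b ^ q ^ i) ^ q = ∑ i ∈ Finset.range n, b ^ q ^ (i + 1) := by
      rw [hqm, sum_pow_char_pow]
      refine Finset.sum_congr rfl fun i _ => ?_
      rw [← pow_mul, pow_succ]
    have h2 := Finset.sum_range_succ (fun i => b ^ q ^ i) n
    rw [Finset.sum_range_succ' (fun i => b ^ q ^ i) n, ← hF, FiniteField.pow_card] at h2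
    rw [h1]
    simpa using h2
  rw [← hF, ← aux_pow q ℓ hq1 hℓ, ← Nat.card_coe_set_eq]
  let e : {ab : F × F | ∑ i ∈ Finset.range n, ab.2 ^ q ^ i = ab.1 ^ ℓ} ≃
      Σ a : {a : F // (a ^ ℓ) ^ q = a ^ ℓ}, {b : F // ∑ i ∈ Finset.range n, b ^ q ^ i = a.1 ^ ℓ} :=
    { toFun := fun x => ⟨⟨x.1.1, by
          have h : ∑ i ∈ Finset.range n, x.1.2 ^ q ^ i = x.1.1 ^ ℓ := x.2
          rw [← h]; exact hfix _⟩, ⟨x.1.2, x.2⟩⟩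
      invFun := fun y => ⟨(y.1.1, y.2.1), y.2.2⟩
      left_inv := fun _ => rfl
      right_inv := fun _ => rfl }
  rw [Nat.card_congr e, Nat.card_sigma,
    Finset.sum_congr rfl fun a _ => aux_main q n hq1 hn hF hadd (a.1 ^ ℓ) a.2]
  simp [mul_comm]
end

section
/- Let q be an odd power of a prime p and k a positive integer with gcd(p, 2k) = 1, and let T(z) = 2·∑_{i=0}^{k-1} z^{q^{k+i}+q^i} + ∑_{i=0}^{2k-1} z^{q^i} ∈ F_q[z]. Then T is separable, i.e. T has no repeated roots in an algebraic closure of F_q (equivalently, T is coprime to its formal derivative). -/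
/-- For `q` an odd power of a prime `p`, `k ≥ 1` with `gcd(p, 2k) = 1`, the polynomial
`T(z) = 2·∑_{i=0}^{k-1} z^{q^{k+i}+q^i} + ∑_{i=0}^{2k-1} z^{q^i}` over `K = F_q` is
separable. -/
theorem stmt_9 (p q k : ℕ) (hp : p.Prime) (hq : ∃ m : ℕ, 0 < m ∧ q = p ^ m)
    (hodd : Odd q) (hk : 0 < k) (hcop : Nat.Coprime p (2 * k))
    (K : Type*) [Field K] [Fintype K] (hK : Fintype.card K = q)
    (T : Polynomial K)
    (hT : T = Polynomial.C 2 *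
        (∑ i ∈ Finset.range k, Polynomial.X ^ (q ^ (k + i) + q ^ i)) +
        ∑ i ∈ Finset.range (2 * k), Polynomial.X ^ q ^ i) :
    T.Separable := by
  obtain ⟨m, hm, hqm⟩ := hq
  have : Fact p.Prime := ⟨hp⟩
  have hqK : (q : K) = 0 := by rw [← hK]; exact Nat.cast_card_eq_zero K
  have hpK : (p : K) = 0 := by
    rw [hqm, Nat.cast_pow] at hqK
    exact pow_eq_zero_iff (by omega) |>.1 hqK
  have : CharP K p := (CharP.charP_iff_prime_eq_zero hp).2 hpK
  have h2k : ((2 * k : ℕ) : K) ≠ 0 := by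
    rw [Ne, CharP.cast_eq_zero_iff K p]
    exact (Nat.Prime.coprime_iff_not_dvd hp).1 hcop
  have h2k' : (2 : K) * k ≠ 0 := by exact_mod_cast h2k
  have h2 : (2 : K) ≠ 0 := left_ne_zero_of_mul h2k'
  have hkK : (k : K) ≠ 0 := right_ne_zero_of_mul h2k'
  obtain ⟨c, hc⟩ : ∃ c : K, 2 * c = -1 := ⟨-1 / 2, by field_simp⟩
  have hcq : ∀ i, c ^ q ^ i = c := fun i => by rw [← hK]; exact FiniteField.pow_card_pow i c
  have hXX : ∀ i, 0 < i → ((q ^ i : ℕ) : K) = 0 := fun i hi => by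
    rw [Nat.cast_pow, hqK, zero_pow hi.ne']
  have hd : Polynomial.derivative T = Polynomial.C 2 * (Polynomial.X - Polynomial.C c) ^ q ^ k := by
    have e1 : Polynomial.derivative (∑ i ∈ Finset.range k,
        (Polynomial.X : Polynomial K) ^ (q ^ (k + i) + q ^ i)) = Polynomial.X ^ q ^ k := by
      rw [Polynomial.derivative_sum, Finset.sum_eq_single_of_mem 0 (by simpa using hk)]
      · rw [Polynomial.derivative_X_pow, Nat.cast_add, hXX _ (by omega)]; simp
      · intro i _ hi
        rw [Polynomial.derivative_X_pow, Nat.cast_add, hXX _ (by omega), hXX _ (by omega)]; simp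
    have e2 : Polynomial.derivative (∑ i ∈ Finset.range (2 * k),
        (Polynomial.X : Polynomial K) ^ q ^ i) = 1 := by
      rw [Polynomial.derivative_sum, Finset.sum_eq_single_of_mem 0 (by simpa using hk)]
      · simp
      · intro i _ hi
        rw [Polynomial.derivative_X_pow, hXX _ (by omega)]; simp
    have e3 : ((Polynomial.X : Polynomial K) - Polynomial.C c) ^ q ^ k
        = Polynomial.X ^ q ^ k - Polynomial.C c := by
      have : (Polynomial.C c : Polynomial K) ^ q ^ k = Polynomial.C c := by
        rw [← Polynomial.C_pow, hcq]
      conv_rhs => rw [← this]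
      rw [hqm, ← pow_mul]
      exact sub_pow_char_pow _ _ _
    rw [hT, Polynomial.derivative_add, Polynomial.derivative_C_mul, e1, e2, e3, mul_sub,
      ← Polynomial.C_mul, hc]
    simp
  have hev : T.eval c ≠ 0 := by
    have : 2 * T.eval c = -k := by
      rw [hT]
      simp only [Polynomial.eval_add, Polynomial.eval_mul, Polynomial.eval_C,
        Polynomial.eval_finsetSum, Polynomial.eval_pow, Polynomial.eval_X, pow_add, pow_mul, hcq,
        Finset.sum_const, Finset.card_range, nsmul_eq_mul]
      push_cast
      linear_combination (2 * c * k + k) * hc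
    intro h
    rw [h, mul_zero] at this
    exact hkK (by simpa using this.symm)
  rw [Polynomial.Separable, hd]
  refine IsCoprime.mul_right ?_ (IsCoprime.pow_right ?_)
  · exact ⟨0, Polynomial.C 2⁻¹, by rw [← Polynomial.C_mul, inv_mul_cancel₀ h2]; simp⟩
  · refine IsCoprime.symm ?_
    rw [(Polynomial.irreducible_X_sub_C c).coprime_iff_not_dvd, Polynomial.dvd_iff_isRoot]
    exact hev
end

section
/- Let q be an odd power of a prime p and k a positive integer with gcd(p, 2k) = 1, and set n = 2k. Then the number of pairs (a, b) ∈ F_{q^n} × F_{q^n} satisfying b^q - b = a^{q^k+1} + a is exactly q^n + q^k. -/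
lemma cyc_count {G : Type*} [CommGroup G] [IsCyclic G] [Finite G] (d e : ℕ)
    (h : Nat.card G = d * e) (c : G) (hc : c ^ e = 1) :
    Set.ncard {a : G | a ^ d = c} = d := by
  have hpos : 0 < Nat.card G := Nat.card_pos
  have hd : 0 < d := Nat.pos_of_ne_zero (by rintro rfl; rw [zero_mul] at h; omega)
  have hle : (powMonoidHom d : G →* G).range ≤ (powMonoidHom e : G →* G).ker := by
    rintro _ ⟨a, rfl⟩
    simp only [MonoidHom.mem_ker, powMonoidHom_apply]
    rw [← pow_mul, ← h, pow_card_eq_one']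
  have heq : (powMonoidHom d : G →* G).range = (powMonoidHom e : G →* G).ker := by
    apply Subgroup.eq_of_le_of_card_ge hle
    rw [IsCyclic.card_powMonoidHom_range, IsCyclic.card_powMonoidHom_ker, h]
    simp [Nat.mul_div_cancel_left e hd]
  have hcm : c ∈ (powMonoidHom e : G →* G).ker := by simpa [MonoidHom.mem_ker] using hc
  rw [← heq] at hcm
  obtain ⟨a0, ha0⟩ := hcm
  simp only [powMonoidHom_apply] at ha0
  have himg : {a : G | a ^ d = c} =
      (fun x => a0 * x) '' ((powMonoidHom d : G →* G).ker : Set G) := by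
    ext a
    simp only [Set.mem_ofPred_eq, Set.mem_image, SetLike.mem_coe, MonoidHom.mem_ker,
      powMonoidHom_apply]
    constructor
    · intro ha
      exact ⟨a0⁻¹ * a, by rw [mul_pow, ha, inv_pow, ha0, inv_mul_cancel], by simp⟩
    · rintro ⟨x, hx, rfl⟩
      rw [mul_pow, hx, ha0, mul_one]
  rw [himg, Set.ncard_image_of_injective _ (mul_right_injective a0)]
  have := IsCyclic.card_powMonoidHom_ker (G := G) d
  rw [h] at this
  simp at this
  rw [← Nat.card_coe_set_eq]
  exact this

lemma field_count {F : Type*} [Field F] [Fintype F] (d e : ℕ)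
    (h : Fintype.card F = d * e + 1) (c : F) (hc0 : c ≠ 0) (hc : c ^ e = 1) :
    Set.ncard {a : F | a ^ d = c} = d := by
  have hG : Nat.card Fˣ = d * e := by
    rw [Nat.card_units, Nat.card_eq_fintype_card, h]; rfl
  have hd : d ≠ 0 := by
    rintro rfl
    have := Nat.card_pos (α := Fˣ)
    rw [zero_mul] at hG; omega
  have := cyc_count d e hG (Units.mk0 c hc0) (by ext; simpa using hc)
  have himg : {a : F | a ^ d = c} = (fun u : Fˣ => (u : F)) '' {a | a ^ d = Units.mk0 c hc0} := by
    ext a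
    simp only [Set.mem_ofPred_eq, Set.mem_image]
    constructor
    · intro ha
      have ha0 : a ≠ 0 := by
        rintro rfl
        rw [zero_pow hd] at ha
        exact hc0 ha.symm
      exact ⟨Units.mk0 a ha0, by ext; simpa using ha, rfl⟩
    · rintro ⟨u, hu, rfl⟩
      have := congrArg Units.val hu
      simpa using this
  rw [himg, Set.ncard_image_of_injective _ Units.val_injective, this]

lemma fixed_count {F : Type*} [Field F] [Fintype F] (Q : ℕ) (hQ : 1 < Q)
    (h : Fintype.card F = Q ^ 2) : Set.ncard {b : F | b ^ Q = b} = Q := by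
  obtain ⟨r, rfl⟩ : ∃ r, Q = r + 1 := ⟨Q - 1, by omega⟩
  have h1 := field_count (F := F) r (r + 2) (by rw [h]; ring) 1 one_ne_zero (one_pow _)
  have : {b : F | b ^ (r + 1) = b} = insert 0 {a : F | a ^ r = 1} := by
    ext b
    simp only [Set.mem_ofPred_eq, Set.mem_insert_iff]
    rcases eq_or_ne b 0 with rfl | hb
    · simp
    · rw [pow_succ]
      simp [hb]
  rw [this, Set.ncard_insert_of_notMem, h1]
  simp only [Set.mem_ofPred_eq]
  rw [zero_pow (by omega)]
  exact zero_ne_one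

/-- For `q` an odd power of a prime `p`, `k ≥ 1` with `gcd(p, 2k) = 1`, and `n = 2k`,
the number of pairs `(a, b) ∈ F_{q^n} × F_{q^n}` with `b^q - b = a^{q^k+1} + a` is
exactly `q^n + q^k`. -/
theorem stmt_11 (p q k : ℕ) (hp : p.Prime) (hq : ∃ m : ℕ, 0 < m ∧ q = p ^ m)
    (hodd : Odd q) (hk : 0 < k) (hcop : Nat.Coprime p (2 * k))
    (F : Type*) [Field F] [Fintype F] (hF : Fintype.card F = q ^ (2 * k)) :
    Set.ncard {ab : F × F | ab.2 ^ q - ab.2 = ab.1 ^ (q ^ k + 1) + ab.1} =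
      q ^ (2 * k) + q ^ k := by
  classical
  obtain ⟨m, hm, hqm⟩ := hq
  haveI : Fact p.Prime := ⟨hp⟩
  haveI : CharP F p := by
    apply charP_of_card_eq_prime_pow (f := m * (2 * k))
    rw [hF, hqm, ← pow_mul]
  have h2k : ((2 * k : ℕ) : F) ≠ 0 := by
    rw [Ne, CharP.cast_eq_zero_iff F p]
    intro hd
    exact hp.one_lt.ne' (Nat.eq_one_of_dvd_coprimes hcop dvd_rfl hd)
  push_cast at h2k
  have h2 : (2 : F) ≠ 0 := left_ne_zero_of_mul h2k
  have hk0 : (k : F) ≠ 0 := right_ne_zero_of_mul h2k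
  obtain ⟨φ, hφ⟩ : ∃ φ : F →+* F, ∀ x, φ x = x ^ q :=
    ⟨iterateFrobenius F p m, fun x => by rw [iterateFrobenius_def, hqm]⟩
  obtain ⟨Q, hQ⟩ : ∃ Q, Q = q ^ k := ⟨_, rfl⟩
  obtain ⟨ψ, hψ⟩ : ∃ ψ : F →+* F, ∀ x, ψ x = x ^ Q :=
    ⟨iterateFrobenius F p (m * k), fun x => by rw [iterateFrobenius_def, hQ, hqm, pow_mul]⟩
  have hq1 : 1 < q := hqm ▸ Nat.one_lt_pow hm.ne' hp.one_lt
  have hQ1 : 1 < Q := hQ ▸ Nat.one_lt_pow hk.ne' hq1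
  have hcard : Fintype.card F = Q ^ 2 := by rw [hF, hQ, ← pow_mul, mul_comm]
  have hcomm : ∀ x, φ (ψ x) = ψ (φ x) := fun x => by
    rw [hφ, hφ, hψ, hψ, ← pow_mul, ← pow_mul, mul_comm]
  have hψψ : ∀ x, ψ (ψ x) = x := fun x => by
    rw [hψ, hψ, ← pow_mul, ← sq, ← hcard, FiniteField.pow_card]
  -- fixed points of φ are fixed by ψ
  have hfix : ∀ x, φ x = x → ψ x = x := by
    intro x hx
    rw [hφ] at hx
    rw [hψ, hQ]
    clear hQ
    clear hF hcop h2k hk0 hk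
    induction k with
    | zero => simp
    | succ j ih => rw [pow_succ, pow_mul, ih, hx]
  -- the telescoping sum
  obtain ⟨d, hd⟩ : ∃ d : F → F, ∀ a, φ (d a) - d a = ψ a - a := by
    refine ⟨fun a => ∑ i ∈ Finset.range k, a ^ q ^ i, fun a => ?_⟩
    rw [map_sum, ← Finset.sum_sub_distrib]
    have := Finset.sum_range_sub (fun i => a ^ q ^ i) k
    simp only [pow_zero, pow_one] at this
    rw [hψ, hQ, ← this]
    refine Finset.sum_congr rfl fun i _ => ?_
    rw [hφ, ← pow_mul, ← pow_succ]
  have hφ2 : φ (2⁻¹) = 2⁻¹ := by rw [map_inv₀, map_ofNat]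
  have hψ2 : ψ (2⁻¹) = 2⁻¹ := by rw [map_inv₀, map_ofNat]
  have hφ4 : φ (4⁻¹) = 4⁻¹ := by rw [map_inv₀, map_ofNat]
  have hψ4 : ψ (4⁻¹) = 4⁻¹ := by rw [map_inv₀, map_ofNat]
  have h4' : (4 : F) = 2 * 2 := by norm_num
  have h4 : (4 : F) ≠ 0 := by rw [h4']; exact mul_ne_zero h2 h2
  -- nonvanishing
  have hnz : ∀ b, ψ b = b → φ b - b + 4⁻¹ ≠ 0 := by
    intro b hb h0
    have hstep : b ^ q = b - 4⁻¹ := by rw [← hφ]; linear_combination h0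
    have hind : ∀ j : ℕ, b ^ q ^ j = b - j * 4⁻¹ := by
      intro j
      induction j with
      | zero => simp
      | succ j ih =>
        rw [pow_succ, pow_mul, ih, ← hφ, map_sub, map_mul, hφ4, map_natCast, hφ, hstep]
        push_cast; ring
    have := hind k
    rw [← hQ, ← hψ, hb] at this
    have h3 : (k : F) * 4⁻¹ = 0 := by linear_combination this
    exact mul_ne_zero hk0 (inv_ne_zero h4) h3
  -- change of variables
  let S : Finset (F × F) := Finset.univ.filter
    fun ab => ψ ab.2 = ab.2 ∧ ab.1 ^ (Q + 1) = φ ab.2 - ab.2 + 4⁻¹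
  have hpre : {ab : F × F | ab.2 ^ q - ab.2 = ab.1 ^ (q ^ k + 1) + ab.1} =
      (fun ab : F × F => (ab.1 - 2⁻¹, ab.2 - d (ab.1 - 2⁻¹) * 2⁻¹)) '' (S : Set (F × F)) := by
    have key : ∀ a b : F, (b ^ q - b = a ^ (q ^ k + 1) + a) ↔
        ((a + 2⁻¹, b + d a * 2⁻¹) : F × F) ∈ S := by
      intro a b
      have hh : (2⁻¹ : F) * 2⁻¹ = 4⁻¹ := by rw [h4', mul_inv]
      have h22 : (2⁻¹ : F) * 2 = 1 := inv_mul_cancel₀ h2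
      simp only [S, Finset.mem_filter, Finset.mem_univ, true_and]
      rw [← hφ, ← hQ, pow_succ, pow_succ, ← hψ, ← hψ, map_add ψ a, hψ2, map_add φ, map_mul, hφ2]
      have e : (ψ a + 2⁻¹) * (a + 2⁻¹) - (φ b + φ (d a) * 2⁻¹ - (b + d a * 2⁻¹) + 4⁻¹)
          = ψ a * a + a - (φ b - b) := by
        linear_combination (-2⁻¹) * hd a + hh + a * h22
      constructor
      · intro h
        have e2 : (ψ a + 2⁻¹) * (a + 2⁻¹) = φ b + φ (d a) * 2⁻¹ - (b + d a * 2⁻¹) + 4⁻¹ := by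
          linear_combination e - h
        refine ⟨?_, e2⟩
        set B := b + d a * 2⁻¹ with hB
        have e3 : (ψ a + 2⁻¹) * (a + 2⁻¹) = φ B - B + 4⁻¹ := by
          rw [e2, hB, map_add, map_mul, hφ2]
        have e4 := congrArg ψ e3
        rw [map_mul, map_add, map_add, hψψ, hψ2, map_add, map_sub, hψ4, ← hcomm] at e4
        have e5 : φ (ψ B - B) = ψ B - B := by
          rw [map_sub]; linear_combination e3 - e4
        have e6 := hfix _ e5
        rw [map_sub, hψψ] at e6
        have e7 : 2 * (ψ B - B) = 0 := by linear_combination -e6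
        have := (mul_eq_zero.mp e7).resolve_left h2
        linear_combination this
      · rintro ⟨-, h⟩
        linear_combination e - h
    ext ⟨a, b⟩
    simp only [Set.mem_ofPred_eq, Set.mem_image, Finset.mem_coe, Prod.exists, Prod.mk.injEq]
    rw [key]
    constructor
    · intro h
      exact ⟨_, _, h, by ring, by simp⟩
    · rintro ⟨x, y, hS, rfl, rfl⟩
      simpa using hS
  rw [hpre, Set.ncard_image_of_injective, Set.ncard_coe_finset]
  · rw [Finset.card_eq_sum_card_fiberwise (f := Prod.snd)
      (t := Finset.univ.filter fun b : F => ψ b = b)]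
    · have hfib : ∀ b ∈ Finset.univ.filter (fun b : F => ψ b = b),
          (S.filter fun ab => ab.2 = b).card = Q + 1 := by
        intro b hb
        have hb' : ψ b = b := by simpa using hb
        have hc : (φ b - b + 4⁻¹) ^ (Q - 1) = 1 := by
          have : ψ (φ b - b + 4⁻¹) = φ b - b + 4⁻¹ := by
            rw [map_add, map_sub, hψ4, ← hcomm, hb']
          rw [hψ, show Q = (Q - 1) + 1 by omega, pow_succ] at this
          simpa [hnz b hb'] using this
        have hcd : Fintype.card F = (Q + 1) * (Q - 1) + 1 := by
          rw [hcard]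
          obtain ⟨r, rfl⟩ : ∃ r, Q = r + 1 := ⟨Q - 1, by omega⟩
          simp; ring
        rw [← field_count (Q + 1) (Q - 1) hcd _ (hnz b hb') hc, ← Set.ncard_coe_finset]
        rw [← Set.ncard_image_of_injective {a : F | _} (Prod.mk_left_injective b)]
        congr 1
        ext ⟨x, y⟩
        simp only [S, Finset.coe_filter, Finset.mem_filter, Finset.mem_univ, true_and,
          Set.mem_ofPred_eq, Set.mem_image, Prod.mk.injEq]
        constructor
        · rintro ⟨⟨_, h⟩, rfl⟩
          exact ⟨x, h, rfl, rfl⟩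
        · rintro ⟨x, h, rfl, rfl⟩
          exact ⟨⟨hb', h⟩, rfl⟩
      rw [Finset.sum_congr rfl hfib, Finset.sum_const, smul_eq_mul]
      have hK := fixed_count (F := F) Q hQ1 hcard
      have : (Finset.univ.filter (fun b : F => ψ b = b)).card = Q := by
        rw [← Set.ncard_coe_finset]
        convert hK using 2
        ext b
        simp [hψ]
      rw [this, ← hQ, mul_comm 2 k, pow_mul, ← hQ]
      ring
    · intro ab h
      simp only [S, Finset.coe_filter, Finset.mem_univ, true_and, Set.mem_ofPred_eq] at h ⊢
      exact h.1
  · rintro ⟨a, b⟩ ⟨a', b'⟩ h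
    simp only [Prod.mk.injEq] at h
    obtain ⟨h1, h2⟩ := h
    have : a = a' := by linear_combination h1
    subst this
    have : b = b' := by linear_combination h2
    rw [this]
end

section
/- Let p be a prime, q an odd power of p, and ℓ a positive integer with gcd(p, ℓ) = 1 such that 2·gcd(ℓ, q+1) divides q+1. Then the number of pairs (a, b) ∈ F_{q^2} × F_{q^2} satisfying b^q - b = a^ℓ is exactly q · (gcd(ℓ(q-1), q^2 - 1) + 1). -/
open Polynomial in
lemma aux_roots {F : Type*} [Field F] [Fintype F] (q : ℕ) (hq : 1 < q) (c : F) :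
    Set.ncard {b : F | b ^ q = c * b} ≤ q := by
  classical
  have hdeg : (X ^ q - C c * X : F[X]).natDegree = q := by
    compute_degree
    all_goals first | omega | (simp [hq.ne, hq.ne']; done) | (rw [if_neg (by omega)]; simp)
  have hne : (X ^ q - C c * X : F[X]) ≠ 0 := by
    intro h
    rw [h] at hdeg
    simp at hdeg
    omega
  have hsub : {b : F | b ^ q = c * b} ⊆ ((X ^ q - C c * X : F[X]).roots.toFinset : Set F) := by
    intro b hb
    have hb' : b ^ q = c * b := hb
    simp [hne, hb']
  calc Set.ncard {b : F | b ^ q = c * b}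
      ≤ Set.ncard ((X ^ q - C c * X : F[X]).roots.toFinset : Set F) :=
        Set.ncard_le_ncard hsub (Finset.finite_toSet _)
    _ = (X ^ q - C c * X : F[X]).roots.toFinset.card := Set.ncard_coe_finset _
    _ ≤ Multiset.card (X ^ q - C c * X : F[X]).roots := Multiset.toFinset_card_le _
    _ ≤ _ := card_roots' _
    _ = q := hdeg

lemma aux_exists {G : Type*} [CommGroup G] [IsCyclic G] [Finite G] (n : ℕ) (x : G)
    (hx : x ^ 2 = 1) (hd : 2 * Nat.gcd n (Nat.card G) ∣ Nat.card G) : ∃ u : G, u ^ n = x := by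
  obtain ⟨g, hg⟩ := IsCyclic.exists_generator (α := G)
  obtain ⟨j, hj⟩ := Subgroup.mem_zpowers_iff.1 (hg x)
  have ho : orderOf g = Nat.card G := orderOf_eq_card_of_forall_mem_zpowers hg
  have h1 : (Nat.card G : ℤ) ∣ 2 * j := by
    rw [← ho, orderOf_dvd_iff_zpow_eq_one, mul_comm, zpow_mul, hj]
    exact_mod_cast hx
  have h2 : ((Nat.gcd n (Nat.card G) : ℕ) : ℤ) ∣ j := by
    have : (2 : ℤ) * (Nat.gcd n (Nat.card G) : ℕ) ∣ 2 * j := dvd_trans (by exact_mod_cast hd) h1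
    exact Int.dvd_of_mul_dvd_mul_left (by norm_num) this
  obtain ⟨k, hk⟩ := h2
  refine ⟨g ^ (Nat.gcdA n (Nat.card G) * k), ?_⟩
  have hN : g ^ (Nat.card G : ℤ) = 1 := by
    rw [zpow_natCast, pow_card_eq_one']
  rw [← hj, hk, Nat.gcd_eq_gcd_ab, add_mul, zpow_add, mul_assoc (Nat.card G : ℤ), zpow_mul g (Nat.card G : ℤ),
    hN, one_zpow, mul_one, ← zpow_natCast, ← zpow_mul]
  congr 1
  ring

lemma aux_units {G : Type*} [CommGroup G] [IsCyclic G] [Finite G] (n : ℕ) (x : G)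
    (hx : x ^ 2 = 1) (hd : 2 * Nat.gcd n (Nat.card G) ∣ Nat.card G) :
    Set.ncard {u : G | u ^ n = x} = Nat.gcd n (Nat.card G) := by
  obtain ⟨v, hv⟩ := aux_exists n x hx hd
  have : {u : G | u ^ n = x} = (v * ·) '' ((powMonoidHom n : G →* G).ker : Set G) := by
    ext u
    simp only [Set.mem_setOf_eq, Set.mem_image, SetLike.mem_coe, MonoidHom.mem_ker,
      powMonoidHom_apply]
    constructor
    · intro h
      exact ⟨v⁻¹ * u, by rw [mul_pow, inv_pow, hv, h, inv_mul_cancel], by simp⟩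
    · rintro ⟨w, hw, rfl⟩
      rw [mul_pow, hv, hw, mul_one]
  rw [this, Set.ncard_image_of_injective _ (mul_right_injective v), Nat.gcd_comm,
    ← IsCyclic.card_powMonoidHom_ker]
  rfl

/-- For `q` an odd power of a prime `p` and `ℓ ≥ 1` with `gcd(p, ℓ) = 1` and
`2·gcd(ℓ, q+1) ∣ q+1`, the number of pairs `(a, b) ∈ F_{q^2} × F_{q^2}` with
`b^q - b = a^ℓ` is exactly `q · (gcd(ℓ(q-1), q^2 - 1) + 1)`. -/
theorem stmt_14 (p q ℓ : ℕ) (hp : p.Prime) (hq : ∃ m : ℕ, 0 < m ∧ q = p ^ m)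
    (hodd : Odd q) (hℓ : 0 < ℓ) (hcop : Nat.Coprime p ℓ)
    (hdvd : 2 * Nat.gcd ℓ (q + 1) ∣ q + 1)
    (F : Type*) [Field F] [Fintype F] (hF : Fintype.card F = q ^ 2) :
    Set.ncard {ab : F × F | ab.2 ^ q - ab.2 = ab.1 ^ ℓ} =
      q * (Nat.gcd (ℓ * (q - 1)) (q ^ 2 - 1) + 1) := by
  classical
  obtain ⟨m, hm, hqm⟩ := hq
  have hq1 : 1 < q := hqm ▸ Nat.one_lt_pow hm.ne' hp.one_lt
  haveI : Fact p.Prime := ⟨hp⟩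
  haveI : CharP F p := by
    obtain ⟨r, hr⟩ := CharP.exists F
    haveI := hr
    obtain ⟨k, hrp, hk⟩ := FiniteField.card F r
    have : r = p := by
      have h1 : r ∣ p ^ (m * 2) := by
        rw [pow_mul, ← hqm, ← hF, hk]
        exact dvd_pow_self _ k.pos.ne'
      exact (Nat.prime_dvd_prime_iff_eq hrp hp).1 (hrp.dvd_of_dvd_pow h1)
    exact this ▸ hr
  have hadd : ∀ x y : F, (x + y) ^ q = x ^ q + y ^ q := by
    intro x y; rw [hqm]; exact add_pow_char_pow ..
  have hqq : ∀ x : F, (x ^ q) ^ q = x := by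
    intro x; rw [← pow_mul, ← sq, ← hF]; exact FiniteField.pow_card x
  have hnegq : ∀ x : F, (-x) ^ q = - x ^ q := fun x => hodd.neg_pow x
  let f : F →+ F :=
    { toFun := fun b => b ^ q - b
      map_zero' := by simp [show q ≠ 0 by omega]
      map_add' := by intro x y; rw [hadd]; ring }
  have hf : ∀ b, f b = b ^ q - b := fun b => rfl
  have hker : (f.ker : Set F) = {b : F | b ^ q = 1 * b} := by
    ext b; simp [AddMonoidHom.mem_ker, hf, sub_eq_zero]
  have hrange : (f.range : Set F) ⊆ {b : F | b ^ q = (-1) * b} := by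
    rintro _ ⟨b, rfl⟩
    simp only [Set.mem_setOf_eq, hf]
    rw [sub_eq_add_neg, hadd, hnegq, hqq]; ring
  have hk1 : Set.ncard (f.ker : Set F) ≤ q := by rw [hker]; exact aux_roots q hq1 1
  have hT := aux_roots (F := F) q hq1 (-1)
  have hr1 : Set.ncard (f.range : Set F) ≤ Set.ncard {b : F | b ^ q = (-1) * b} :=
    Set.ncard_le_ncard hrange (Set.toFinite _)
  have hprod : Set.ncard (f.ker : Set F) * Set.ncard (f.range : Set F) = q ^ 2 := by
    have := f.ker.card_mul_index
    rw [AddSubgroup.index_ker, Nat.card_eq_fintype_card (α := F), hF] at this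
    exact this
  have hkq : Set.ncard (f.ker : Set F) = q := by nlinarith
  have hrq : Set.ncard (f.range : Set F) = q := by nlinarith
  have hrange' : (f.range : Set F) = {b : F | b ^ q = (-1) * b} :=
    Set.eq_of_subset_of_ncard_le hrange (by omega) (Set.toFinite _)
  -- the good `a`
  have hN : Nat.card Fˣ = q ^ 2 - 1 := by
    rw [Nat.card_eq_fintype_card, Fintype.card_units, hF]
  have hfac : q ^ 2 - 1 = (q + 1) * (q - 1) := by
    have := Nat.sq_sub_sq q 1
    simpa using this
  have hunits : Set.ncard {u : Fˣ | u ^ (ℓ * (q - 1)) = -1}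
      = Nat.gcd (ℓ * (q - 1)) (q ^ 2 - 1) := by
    rw [← hN]
    apply aux_units _ _ (by simp)
    rw [hN, hfac, Nat.gcd_mul_right, ← mul_assoc]
    exact Nat.mul_dvd_mul_right hdvd _
  have hA : {a : F | a ^ ℓ ∈ f.range}
      = insert 0 (Units.val '' {u : Fˣ | u ^ (ℓ * (q - 1)) = -1}) := by
    have hmem : ∀ c : F, c ∈ f.range ↔ c ^ q = (-1) * c := by
      intro c; rw [← SetLike.mem_coe, hrange']; rfl
    have key : ∀ u : Fˣ, (u : F) ^ ℓ ∈ f.range ↔ u ^ (ℓ * (q - 1)) = -1 := by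
      intro u
      rw [hmem, ← Units.val_inj]
      have e : ((u : F) ^ ℓ) ^ q = (u : F) ^ (ℓ * (q - 1)) * (u : F) ^ ℓ := by
        rw [← pow_mul, ← pow_add]
        congr 1
        obtain ⟨k, rfl⟩ : ∃ k, q = k + 1 := ⟨q - 1, by omega⟩
        simp [mul_add]
      rw [e, mul_left_inj' (pow_ne_zero _ u.ne_zero)]
      simp
    ext a
    simp only [Set.mem_setOf_eq, Set.mem_insert_iff, Set.mem_image]
    constructor
    · intro h
      by_cases ha : a = 0
      · exact Or.inl ha
      · exact Or.inr ⟨Units.mk0 a ha, (key _).1 h, rfl⟩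
    · rintro (rfl | ⟨u, hu, rfl⟩)
      · rw [zero_pow hℓ.ne']; exact zero_mem _
      · exact (key u).2 hu
  have hAcard : Set.ncard {a : F | a ^ ℓ ∈ f.range}
      = Nat.gcd (ℓ * (q - 1)) (q ^ 2 - 1) + 1 := by
    rw [hA, Set.ncard_insert_of_notMem (by simp) (Set.toFinite _),
      Set.ncard_image_of_injective _ Units.val_injective, hunits]
  have hch : ∀ a : F, ∃ b : F, a ^ ℓ ∈ f.range → f b = a ^ ℓ := by
    intro a
    by_cases h : a ^ ℓ ∈ f.range
    · obtain ⟨b, hb⟩ := h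
      exact ⟨b, fun _ => hb⟩
    · exact ⟨0, fun h' => absurd h' h⟩
  choose s hs using hch
  have hS : {ab : F × F | ab.2 ^ q - ab.2 = ab.1 ^ ℓ}
      = (fun x : F × F => (x.1, s x.1 + x.2)) ''
        ({a : F | a ^ ℓ ∈ f.range} ×ˢ (f.ker : Set F)) := by
    ext ⟨a, b⟩
    simp only [Set.mem_setOf_eq, Set.mem_image, Set.mem_prod, SetLike.mem_coe, Prod.exists,
      Prod.mk.injEq, ← hf]
    constructor
    · intro h
      have ha : a ^ ℓ ∈ f.range := ⟨b, h⟩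
      refine ⟨a, b - s a, ⟨ha, ?_⟩, rfl, by ring⟩
      rw [AddMonoidHom.mem_ker, map_sub, h, hs a ha, sub_self]
    · rintro ⟨a', k, ⟨ha, hk⟩, rfl, rfl⟩
      rw [map_add, hs _ ha, AddMonoidHom.mem_ker.1 hk, add_zero]
  have hinj : Function.Injective (fun x : F × F => (x.1, s x.1 + x.2)) := by
    rintro ⟨a, b⟩ ⟨c, d⟩ h
    simp only [Prod.mk.injEq] at h
    obtain ⟨rfl, h⟩ := h
    simpa using h
  rw [hS, Set.ncard_image_of_injective _ hinj, Set.ncard_prod, hAcard, hkq, mul_comm]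
end

section
/- Let p be a prime, q a power of p, s and n positive integers with s dividing n, and ℓ a positive integer with gcd(p, ℓ) = 1. Let n_ℓ^s denote the cardinality of the cyclotomic coset {ℓ·q^{js} mod (q^n - 1) : j = 0, 1, 2, ...}, and assume p divides (n/s)/n_ℓ^s. Then the number of pairs (a, b) ∈ F_{q^n} × F_{q^n} satisfying b^{q^s} - b = a^ℓ is exactly q^{n+s}. -/
open Polynomial in
lemma aux_card_le {F : Type*} [Field F] [Fintype F] (P : F[X]) (hP : P ≠ 0) (S : Set F)
    (h : ∀ x ∈ S, P.eval x = 0) : S.ncard ≤ P.natDegree := by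
  classical
  have h1 : S ⊆ (P.roots.toFinset : Set F) := by
    intro x hx
    simp [hP, h x hx]
  calc S.ncard ≤ (P.roots.toFinset : Set F).ncard := Set.ncard_le_ncard h1 (Finset.finite_toSet _)
    _ = P.roots.toFinset.card := Set.ncard_coe_finset _
    _ ≤ Multiset.card P.roots := Multiset.toFinset_card_le _
    _ ≤ P.natDegree := P.card_roots'

lemma aux_sum_periodic {F : Type*} [Field F] (h : ℕ → F) (d k : ℕ) (hd : ∀ j, h (j + d) = h j) :
    ∑ j ∈ Finset.range (d * k), h j = k * ∑ j ∈ Finset.range d, h j := by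
  have hk : ∀ k i, h (d * k + i) = h i := by
    intro k
    induction k with
    | zero => simp
    | succ k ih =>
      intro i
      rw [← ih i, ← hd (d * k + i)]
      congr 1; ring
  induction k with
  | zero => simp
  | succ k ih =>
    rw [Nat.mul_succ, Finset.sum_range_add, ih]
    simp only [hk]
    push_cast; ring

lemma aux_period (M N Q l d : ℕ) (hN : 0 < N) (hQ : Q ^ N % M = 1 % M)
    (hd : d = Set.ncard {x : ℕ | ∃ j : ℕ, x = (l * Q ^ j) % M}) :
    d ∣ N ∧ ∀ j, (l * Q ^ (j + d)) % M = (l * Q ^ j) % M := by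
  set g : ℕ → ℕ := fun x => x * Q % M with hg
  have hit : ∀ j, g^[j] (l % M) = (l * Q ^ j) % M := by
    intro j
    induction j with
    | zero => simp
    | succ j ih =>
      rw [Function.iterate_succ_apply', ih, hg]
      simp [pow_succ, mul_assoc]
  have hper : Function.IsPeriodicPt g N (l % M) := by
    unfold Function.IsPeriodicPt Function.IsFixedPt
    rw [hit, Nat.mul_mod, hQ, ← Nat.mul_mod, mul_one]
  have hpos := hper.minimalPeriod_pos hN
  have hset : {x : ℕ | ∃ j : ℕ, x = (l * Q ^ j) % M} =
      (fun j => g^[j] (l % M)) '' Set.Iio (Function.minimalPeriod g (l % M)) := by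
    ext x
    constructor
    · rintro ⟨j, rfl⟩
      refine ⟨j % Function.minimalPeriod g (l % M), Nat.mod_lt _ hpos, ?_⟩
      simp only
      rw [Function.iterate_mod_minimalPeriod_eq, hit]
    · rintro ⟨j, -, rfl⟩
      exact ⟨j, hit j⟩
  have hdd : d = Function.minimalPeriod g (l % M) := by
    rw [hd, hset, Set.ncard_image_of_injOn Function.iterate_injOn_Iio_minimalPeriod]
    simp [Set.ncard_eq_toFinset_card']
  refine ⟨hdd ▸ hper.minimalPeriod_dvd, fun j => ?_⟩
  rw [← hit, ← hit, hdd, Function.iterate_add_minimalPeriod_eq]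

open Polynomial in
lemma aux_main_s16 {F : Type*} [Field F] [Fintype F] (p Q N r : ℕ) [Fact p.Prime] [CharP F p]
    (hr : 0 < r) (hQ : Q = p ^ r) (hN : 0 < N) (hF : Fintype.card F = Q ^ N) (l : ℕ)
    (hT : ∀ a : F, ∑ j ∈ Finset.range N, (a ^ l) ^ Q ^ j = 0) :
    Set.ncard {ab : F × F | ab.2 ^ Q - ab.2 = ab.1 ^ l} = Q ^ N * Q := by
  classical
  have hQ1 : 1 < Q := hQ ▸ Nat.one_lt_pow hr.ne' (Fact.out : p.Prime).one_lt
  let φ : F →+ F := AddMonoidHom.mk' (fun b => b ^ Q - b) (by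
    intro a b
    simp only [hQ, add_pow_char_pow]; ring)
  have hφ : ∀ b, φ b = b ^ Q - b := fun b => rfl
  have hker : Set.ncard (φ.ker : Set F) ≤ Q := by
    have := aux_card_le (X ^ Q - X : F[X]) (FiniteField.X_pow_card_sub_X_ne_zero F hQ1) (φ.ker : Set F) (by
      intro x hx
      have : φ x = 0 := hx
      simpa [hφ] using this)
    rwa [FiniteField.X_pow_card_sub_X_natDegree_eq F hQ1] at this
  let T : Set F := {x | ∑ j ∈ Finset.range N, x ^ Q ^ j = 0}
  have hTc : T.ncard ≤ Q ^ (N - 1) := by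
    set P : F[X] := ∑ j ∈ Finset.range N, X ^ Q ^ j with hP
    have hP0 : P ≠ 0 := by
      intro h0
      have : P.coeff (Q ^ 0) = 1 := by
        rw [hP, finset_sum_coeff, Finset.sum_eq_single 0]
        · simp
        · intro j _ hj
          rw [coeff_X_pow, if_neg]
          intro h
          exact hj (Nat.pow_right_injective hQ1 h).symm
        · intro h; simp at h; omega
      simp [h0] at this
    refine (aux_card_le P hP0 T ?_).trans ?_
    · intro x hx
      have : ∑ j ∈ Finset.range N, x ^ Q ^ j = 0 := hx
      simpa [hP, eval_finset_sum] using this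
    · refine natDegree_sum_le_of_forall_le _ _ ?_
      intro j hj
      rw [natDegree_X_pow]
      exact Nat.pow_le_pow_right (by omega) (by have := Finset.mem_range.1 hj; omega)
  have hsub : (φ.range : Set F) ⊆ T := by
    rintro _ ⟨b, rfl⟩
    change ∑ j ∈ Finset.range N, (b ^ Q - b) ^ Q ^ j = 0
    have : ∀ j, (b ^ Q - b) ^ Q ^ j = b ^ Q ^ (j + 1) - b ^ Q ^ j := by
      intro j
      have h1 : Q ^ j = p ^ (r * j) := by rw [hQ, pow_mul]
      rw [pow_succ', pow_mul b Q, h1, sub_pow_char_pow]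
    simp only [this]
    rw [Finset.sum_range_sub (fun j => b ^ Q ^ j), ← hF, FiniteField.pow_card]
    simp
  have hprod : Set.ncard (φ.ker : Set F) * Set.ncard (φ.range : Set F) = Q ^ N := by
    have h1 := φ.ker.card_mul_index
    rw [AddSubgroup.index_ker, Nat.card_eq_fintype_card (α := F), hF] at h1
    exact h1
  have hran : Set.ncard (φ.range : Set F) ≤ T.ncard := Set.ncard_le_ncard hsub (Set.toFinite _)
  have hQN : Q ^ N = Q * Q ^ (N - 1) := by
    rw [← pow_succ']; congr 1; omega
  have hQp : 0 < Q ^ (N - 1) := by positivity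
  have hkerQ : Set.ncard (φ.ker : Set F) = Q := by
    apply le_antisymm hker
    by_contra! h
    nlinarith
  have hranQ : Set.ncard (φ.range : Set F) = Q ^ (N - 1) := by
    rw [hkerQ, hQN] at hprod
    exact Nat.eq_of_mul_eq_mul_left (by omega) hprod
  have heq : (φ.range : Set F) = T :=
    Set.eq_of_subset_of_ncard_le hsub (by omega) (Set.toFinite _)
  have hex : ∀ a : F, ∃ b, φ b = a ^ l := by
    intro a
    have : a ^ l ∈ (φ.range : Set F) := by rw [heq]; exact hT a
    exact this
  choose c hc using hex
  have himg : {ab : F × F | ab.2 ^ Q - ab.2 = ab.1 ^ l} =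
      (fun u : F × F => (u.1, c u.1 + u.2)) '' (Set.univ ×ˢ (φ.ker : Set F)) := by
    ext ⟨a, b⟩
    simp only [Set.mem_setOf_eq, Set.mem_image, Set.mem_prod, Set.mem_univ, true_and,
      SetLike.mem_coe, AddMonoidHom.mem_ker, Prod.exists, Prod.mk.injEq]
    rw [← hφ]
    constructor
    · intro h
      exact ⟨a, b - c a, by rw [map_sub, hc, h, sub_self], rfl, by ring⟩
    · rintro ⟨a', k, hk, rfl, rfl⟩
      rw [map_add, hc, hk, add_zero]
  rw [himg, Set.ncard_image_of_injective, Set.ncard_prod, hkerQ, Set.ncard_univ,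
    Nat.card_eq_fintype_card, hF]
  rintro ⟨a, b⟩ ⟨a', b'⟩ h
  simp only [Prod.mk.injEq] at h
  obtain ⟨rfl, h⟩ := h
  simpa using h


/-- Let `s ∣ n`, `gcd(p, ℓ) = 1`, and let `nℓs` be the cardinality of the cyclotomic
coset `{ℓ·q^{js} mod (q^n - 1) : j = 0, 1, 2, …}`. If `p` divides `(n/s) / nℓs`, then
the number of pairs `(a, b) ∈ F_{q^n} × F_{q^n}` with `b^{q^s} - b = a^ℓ` is exactly
`q^{n+s}`. -/
theorem stmt_16 (p q s n ℓ nℓs : ℕ) (hp : p.Prime) (hq : ∃ m : ℕ, 0 < m ∧ q = p ^ m)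
    (hs : 0 < s) (hn : 0 < n) (hℓ : 0 < ℓ) (hsn : s ∣ n) (hcop : Nat.Coprime p ℓ)
    (hnℓs : nℓs = Set.ncard {x : ℕ | ∃ j : ℕ, x = (ℓ * q ^ (j * s)) % (q ^ n - 1)})
    (hdvd : p ∣ (n / s) / nℓs)
    (F : Type*) [Field F] [Fintype F] (hF : Fintype.card F = q ^ n) :
    Set.ncard {ab : F × F | ab.2 ^ q ^ s - ab.2 = ab.1 ^ ℓ} = q ^ (n + s) := by

  obtain ⟨m, hm, rfl⟩ := hq
  obtain ⟨N, rfl⟩ := hsn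
  have hN : 0 < N := Nat.pos_of_mul_pos_left hn
  rw [Nat.mul_div_cancel_left _ hs] at hdvd
  have : Fact p.Prime := ⟨hp⟩
  set Q := (p ^ m) ^ s with hQ
  have hF' : Fintype.card F = Q ^ N := by rw [hF, pow_mul]
  have : CharP F p := by
    have hF2 : Fintype.card F = p ^ (m * (s * N)) := by rw [hF, ← pow_mul]
    exact charP_of_card_eq_prime_pow hF2
  have hQN : 1 < Q ^ N := by rw [← hF']; exact Fintype.one_lt_card
  rw [pow_mul, ← hQ] at hnℓs
  have hset : {x : ℕ | ∃ j : ℕ, x = (ℓ * (p ^ m) ^ (j * s)) % (Q ^ N - 1)} =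
      {x : ℕ | ∃ j : ℕ, x = (ℓ * Q ^ j) % (Q ^ N - 1)} := by
    simp only [hQ, ← pow_mul (p ^ m) s, mul_comm s]
  rw [hset] at hnℓs
  obtain ⟨hdN, hper⟩ := aux_period (Q ^ N - 1) N Q ℓ nℓs hN (by
    conv_lhs => rw [show Q ^ N = 1 + (Q ^ N - 1) by omega]
    simp) hnℓs
  rw [pow_add, ← hQ, pow_mul, ← hQ]
  refine aux_main_s16 p Q N (m * s) (by positivity) (by rw [hQ, pow_mul]) hN hF' ℓ ?_
  intro a
  obtain ⟨k, rfl⟩ := hdN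
  rw [Nat.mul_div_cancel_left _ (Nat.pos_of_mul_pos_right hN)] at hdvd
  rw [aux_sum_periodic, (CharP.cast_eq_zero_iff F p k).2 hdvd, zero_mul]
  intro j
  have hQ0 : 0 < Q := pow_pos (pow_pos hp.pos _) _
  clear_value Q
  rw [← pow_mul a, ← pow_mul a]
  by_cases ha : a = 0
  · subst ha
    rw [zero_pow (by positivity), zero_pow (by positivity)]
  · have h1 := FiniteField.pow_card_sub_one_eq_one a ha
    rw [hF'] at h1
    rw [pow_eq_pow_mod _ h1, hper, ← pow_eq_pow_mod _ h1]
end
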